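/- Let a be an element of an effect algebra E satisfying the Riesz decomposition property. The following are equivalent: (a) a is sharp; (b) a is central; (c) a is principal. -/

import Mathlib

/-- An effect algebra: a partial commutative, associative operation `oplus`
(with definedness encoded via `Option`), constants `zero` and `one`,
unique orthosupplements, and `a ⊕ 1` defined only for `a = 0`. -/
structure EffectAlgebra (E : Type*) where
  oplus : E → E → Option E
  zero : E
  one : E
  comm : ∀ a b, oplus a b = oplus b a
  assoc : ∀ a b c ab abc, oplus a b = some ab → oplus ab c = some abc →
    ∃ bc, oplus b c = some bc ∧ oplus a bc = some abc
  compl_exists : ∀ a, ∃ b, oplus a b = some one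
  compl_unique : ∀ a b c, oplus a b = some one → oplus a c = some one → b = c
  add_one : ∀ a b, oplus a one = some b → a = zero

namespace EffectAlgebra

variable {E : Type*} (A : EffectAlgebra E)

/-- `a ⊥ b` : the sum `a ⊕ b` is defined. -/
def Perp (a b : E) : Prop := (A.oplus a b).isSome

/-- `a ≤ b` iff `b = a ⊕ c` for some `c`. -/
def le (a b : E) : Prop := ∃ c, A.oplus a c = some b

/-- The orthosupplement `a'`: the unique `b` with `a ⊕ b = 1`. -/
noncomputable def compl (a : E) : E :=
  @Classical.epsilon E ⟨A.zero⟩ fun b => A.oplus a b = some A.one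

/-- `a ⊖ b` : the unique `c` with `b ⊕ c = a` (defined when `b ≤ a`). -/
noncomputable def ominus (a b : E) : E :=
  @Classical.epsilon E ⟨A.zero⟩ fun c => A.oplus b c = some a

/-- Homogeneity. -/
def Homogeneous : Prop :=
  ∀ u v₁ v₂ s, A.oplus v₁ v₂ = some s → A.le u s → A.le u (A.compl s) →
    ∃ u₁ u₂, A.le u₁ v₁ ∧ A.le u₂ v₂ ∧ A.oplus u₁ u₂ = some u

/-- Riesz decomposition property. -/
def RDP : Prop :=
  ∀ u v₁ v₂ s, A.oplus v₁ v₂ = some s → A.le u s →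
    ∃ u₁ u₂, A.le u₁ v₁ ∧ A.le u₂ v₂ ∧ A.oplus u₁ u₂ = some u

/-- The sum `c₁ ⊕ … ⊕ cₙ` of a finite family (a list); `some s` iff the family
is orthogonal with sum `s`. -/
def sumList : List E → Option E
  | [] => some A.zero
  | x :: xs => (sumList xs).bind fun s => A.oplus x s

/-- The subfamily of `C` indexed by a set of indices `S ⊆ {1,…,n}`. -/
def pickList (C : List E) (S : Finset (Fin C.length)) : List E :=
  (S.sort (· ≤ ·)).map C.get

/-- `C` is an orthogonal cover of `M`. -/
def IsCoverOf (C : List E) (M : Set E) : Prop :=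
  (A.sumList C).isSome ∧
    ∀ a ∈ M, ∃ S : Finset (Fin C.length), A.sumList (pickList C S) = some a

/-- `M` is compatible with covers in `X`: every finite subset of `M` has an
orthogonal cover with range contained in `X`. -/
def CompatWithCoversIn (M X : Set E) : Prop :=
  ∀ F : Finset E, ↑F ⊆ M →
    ∃ C : List E, (∀ c ∈ C, c ∈ X) ∧ A.IsCoverOf C ↑F

/-- `M` is compatible (with covers in `E`). -/
def Compatible (M : Set E) : Prop := A.CompatWithCoversIn M Set.univ

/-- `M` is internally compatible. -/
def InternallyCompatible (M : Set E) : Prop := A.CompatWithCoversIn M M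

/-- `D` is a refinement of `C`: a partition `{P i}` of the index set of `D`
with `C i = ⊕_{j ∈ P i} D j`. -/
def IsRefinement (D C : List E) : Prop :=
  ∃ P : Fin C.length → Finset (Fin D.length),
    (∀ i j, i ≠ j → Disjoint (P i) (P j)) ∧
    (∀ k, ∃ i, k ∈ P i) ∧
    (∀ i, A.sumList (pickList D (P i)) = some (C.get i))

/-- One step of the closure construction `M ↦ M₁`. -/
def closureStep (M : Set E) : Set E :=
  {x | ∃ y ∈ M, A.le x y ∧ A.le x (A.compl y)} ∪
  {z | ∃ y ∈ M, ∃ x, A.le x y ∧ A.le x (A.compl y) ∧ A.oplus x z = some y}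

/-- The sets `Mₙ`. -/
def closureSeq (M : Set E) (n : ℕ) : Set E := (A.closureStep)^[n] M

/-- The closure `M̄ = ⋃ₙ Mₙ`. -/
def closure (M : Set E) : Set E := ⋃ n, A.closureSeq M n

/-- `B` is a sub-effect algebra of `E`. -/
def IsSubEA (B : Set E) : Prop :=
  A.one ∈ B ∧ ∀ a ∈ B, ∀ b ∈ B, A.le b a → A.ominus a b ∈ B

/-- The Riesz decomposition property for (the effect algebra on) a subset `B`. -/
def RDPOn (B : Set E) : Prop :=
  ∀ u v₁ v₂ s, u ∈ B → v₁ ∈ B → v₂ ∈ B → A.oplus v₁ v₂ = some s → A.le u s →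
    ∃ u₁ u₂, u₁ ∈ B ∧ u₂ ∈ B ∧ A.le u₁ v₁ ∧ A.le u₂ v₂ ∧ A.oplus u₁ u₂ = some u

/-- Homogeneity for (the effect algebra on) a subset `B`. -/
def HomogeneousOn (B : Set E) : Prop :=
  ∀ u v₁ v₂ s, u ∈ B → v₁ ∈ B → v₂ ∈ B → A.oplus v₁ v₂ = some s →
    A.le u s → A.le u (A.compl s) →
    ∃ u₁ u₂, u₁ ∈ B ∧ u₂ ∈ B ∧ A.le u₁ v₁ ∧ A.le u₂ v₂ ∧ A.oplus u₁ u₂ = some u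

/-- A block: a maximal sub-effect algebra satisfying the Riesz decomposition
property. -/
def IsBlock (B : Set E) : Prop :=
  A.IsSubEA B ∧ A.RDPOn B ∧
    ∀ B', A.IsSubEA B' → A.RDPOn B' → B ⊆ B' → B' = B

/-- A block of the sub-effect algebra on `F`: a maximal sub-effect algebra of
`F` satisfying the Riesz decomposition property. -/
def IsBlockIn (F B : Set E) : Prop :=
  B ⊆ F ∧ A.IsSubEA B ∧ A.RDPOn B ∧
    ∀ B', B' ⊆ F → A.IsSubEA B' → A.RDPOn B' → B ⊆ B' → B' = B

/-- `a` is sharp: the infimum `a ∧ a'` exists and equals `0`, i.e. every common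
lower bound of `a` and `a'` is `0`. -/
def Sharp (a : E) : Prop :=
  ∀ b, A.le b a → A.le b (A.compl a) → b = A.zero

/-- `a` is sharp in the sub-effect algebra on `F`. -/
def SharpIn (F : Set E) (a : E) : Prop :=
  a ∈ F ∧ ∀ b ∈ F, A.le b a → A.le b (A.compl a) → b = A.zero

/-- `a` is principal. -/
def Principal (a : E) : Prop :=
  ∀ x y s, A.le x a → A.le y a → A.oplus x y = some s → A.le s a

/-- `a` is principal in the sub-effect algebra on `B`. -/
def PrincipalIn (B : Set E) (a : E) : Prop :=
  a ∈ B ∧ ∀ x ∈ B, ∀ y ∈ B, ∀ s, A.le x a → A.le y a →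
    A.oplus x y = some s → A.le s a

/-- `a` is central: principal, and every `b` has a unique decomposition
`b = b₁ ⊕ b₂` with `b₁ ≤ a`, `b₂ ≤ a'`. -/
def Central (a : E) : Prop :=
  A.Principal a ∧ ∀ b, ∃! p : E × E,
    A.le p.1 a ∧ A.le p.2 (A.compl a) ∧ A.oplus p.1 p.2 = some b

/-- `a` is central in the sub-effect algebra on `B`. -/
def CentralIn (B : Set E) (a : E) : Prop :=
  A.PrincipalIn B a ∧ ∀ b ∈ B, ∃! p : E × E,
    p.1 ∈ B ∧ p.2 ∈ B ∧ A.le p.1 a ∧ A.le p.2 (A.compl a) ∧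
      A.oplus p.1 p.2 = some b

/-- The center `C(E)`. -/
def center : Set E := {a | A.Central a}

/-- The compatibility center `K(E)`: the intersection of all blocks. -/
def compatCenter : Set E := {x | ∀ B, A.IsBlock B → x ∈ B}

end EffectAlgebra

/-!
Let `a` be sharp, so that `a` and `a'` have only `0` as a common lower bound. Under the Riesz
decomposition property an element below `v₁ ⊕ v₂` which is disjoint from `v₂` lies below `v₁`.
Consequently a sum `s` of elements below `a` is disjoint from `a'`, and `s ≤ 1 = a ⊕ a'` yields
`s ≤ a`: the element `a` is principal. The same absorption makes decompositions along
`1 = a ⊕ a'` unique. Conversely, if `a` is principal and `b ≤ a, a'`, then `a ⊕ b` is defined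
and lies below `a`, which forces `b = 0`.
-/

namespace EffectAlgebra

variable {E : Type*} {A : EffectAlgebra E} {a b c s x y z : E}

theorem oplus_compl (A : EffectAlgebra E) (a : E) : A.oplus a (A.compl a) = some A.one :=
  Classical.epsilon_spec (A.compl_exists a)

theorem le_one (A : EffectAlgebra E) (a : E) : A.le a A.one :=
  ⟨_, A.oplus_compl a⟩

theorem one_oplus_zero (A : EffectAlgebra E) : A.oplus A.one A.zero = some A.one := by
  obtain ⟨b, one_oplus_b⟩ := A.compl_exists A.one
  have b_eq_zero : b = A.zero := A.add_one b A.one (A.comm A.one b ▸ one_oplus_b)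
  rwa [b_eq_zero] at one_oplus_b

theorem oplus_zero (A : EffectAlgebra E) (a : E) : A.oplus a A.zero = some a := by
  obtain ⟨b, hab⟩ := A.compl_exists a
  have hba : A.oplus b a = some A.one := A.comm a b ▸ hab
  obtain ⟨c, hac, hbc⟩ := A.assoc _ _ _ _ _ hba A.one_oplus_zero
  rw [hac, A.compl_unique _ _ _ hbc hba]

theorem oplus_left_cancel (hb : A.oplus a b = some s) (hc : A.oplus a c = some s) : b = c := by
  obtain ⟨d, hsd⟩ := A.compl_exists s
  rw [A.comm] at hb hc
  obtain ⟨t, hat, hbt⟩ := A.assoc _ _ _ _ _ hb hsd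
  obtain ⟨t', hat', hct⟩ := A.assoc _ _ _ _ _ hc hsd
  obtain rfl : t = t' := Option.some.inj (hat.symm.trans hat')
  rw [A.comm] at hbt hct
  exact A.compl_unique _ _ _ hbt hct

theorem eq_zero_of_oplus_eq_self (h : A.oplus a b = some a) : b = A.zero :=
  oplus_left_cancel h (A.oplus_zero a)

theorem eq_zero_of_oplus_eq_zero (h : A.oplus a b = some A.zero) : b = A.zero := by
  have zero_oplus_one : A.oplus A.zero A.one = some A.one := A.comm _ _ ▸ A.one_oplus_zero
  obtain ⟨t, hbt, -⟩ := A.assoc _ _ _ _ _ h zero_oplus_one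
  exact A.add_one _ _ hbt

theorem le_oplus_left (h : A.oplus a b = some s) : A.le a s :=
  ⟨b, h⟩

theorem le_oplus_right (h : A.oplus a b = some s) : A.le b s :=
  ⟨a, A.comm a b ▸ h⟩

theorem le_refl (A : EffectAlgebra E) (a : E) : A.le a a :=
  ⟨_, A.oplus_zero a⟩

theorem le_trans (hab : A.le a b) (hbc : A.le b c) : A.le a c := by
  obtain ⟨d, hd⟩ := hab
  obtain ⟨e, he⟩ := hbc
  obtain ⟨t, -, ht⟩ := A.assoc _ _ _ _ _ hd he
  exact ⟨t, ht⟩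

theorem le_antisymm (hab : A.le a b) (hba : A.le b a) : a = b := by
  obtain ⟨c, hc⟩ := hab
  obtain ⟨d, hd⟩ := hba
  obtain ⟨t, hcd, hat⟩ := A.assoc _ _ _ _ _ hc hd
  obtain rfl : t = A.zero := eq_zero_of_oplus_eq_self hat
  obtain rfl : c = A.zero := eq_zero_of_oplus_eq_zero (A.comm c d ▸ hcd)
  exact Option.some.inj ((A.oplus_zero a).symm.trans hc)

theorem exists_oplus_of_le_compl (h : A.le b (A.compl a)) : ∃ s, A.oplus a b = some s := by
  obtain ⟨c, hc⟩ := h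
  obtain ⟨s, hs, -⟩ := A.assoc _ _ _ _ _ (A.comm b c ▸ hc) (A.comm _ _ ▸ A.oplus_compl a)
  exact ⟨s, A.comm b a ▸ hs⟩

/-- `x` and `y` are disjoint: `x ∧ y` exists and equals `0`. The order of an effect algebra is not
a typeclass instance here, so this replaces the order-theoretic `Disjoint`; the sharp elements are
those disjoint from their orthosupplement. -/
protected def Disjoint (A : EffectAlgebra E) (x y : E) : Prop :=
  ∀ d, A.le d x → A.le d y → d = A.zero

theorem sharp_iff_disjoint_compl : A.Sharp a ↔ A.Disjoint a (A.compl a) :=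
  Iff.rfl

theorem Disjoint.symm (h : A.Disjoint x y) : A.Disjoint y x :=
  fun d hdy hdx ↦ h d hdx hdy

theorem Disjoint.mono (h : A.Disjoint x y) (ha : A.le a x) (hb : A.le b y) : A.Disjoint a b :=
  fun d hda hdb ↦ h d (le_trans hda ha) (le_trans hdb hb)

theorem Principal.sharp (h : A.Principal a) : A.Sharp a := by
  intro b hba hba'
  obtain ⟨s, hs⟩ := exists_oplus_of_le_compl hba'
  have hsa : s = a := le_antisymm (h a b s (A.le_refl a) hba hs) (le_oplus_left hs)
  exact eq_zero_of_oplus_eq_self (hsa ▸ hs)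

namespace RDP

theorem le_left_of_disjoint_right (hR : A.RDP) (hs : A.oplus x y = some s) (hbs : A.le b s)
    (hby : A.Disjoint b y) : A.le b x := by
  obtain ⟨b₁, b₂, hb₁, hb₂, hb⟩ := hR b x y s hs hbs
  obtain rfl : b₂ = A.zero := hby b₂ (le_oplus_right hb) hb₂
  obtain rfl : b₁ = b := Option.some.inj ((A.oplus_zero b₁).symm.trans hb)
  exact hb₁

theorem disjoint_oplus (hR : A.RDP) (hs : A.oplus x y = some s) (hx : A.Disjoint x z)
    (hy : A.Disjoint y z) : A.Disjoint s z := by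
  intro d hds hdz
  have hdy : A.Disjoint d y := hy.symm.mono hdz (A.le_refl y)
  exact hx d (hR.le_left_of_disjoint_right hs hds hdy) hdz

theorem principal_of_sharp (hR : A.RDP) (ha : A.Sharp a) : A.Principal a := by
  rw [sharp_iff_disjoint_compl] at ha
  intro x y s hx hy hs
  have hs' : A.Disjoint s (A.compl a) :=
    hR.disjoint_oplus hs (ha.mono hx (A.le_refl _)) (ha.mono hy (A.le_refl _))
  exact hR.le_left_of_disjoint_right (A.oplus_compl a) (A.le_one s) hs'

theorem le_left_of_oplus_eq_oplus (hR : A.RDP) (hxy : A.Disjoint x y) {p₁ p₂ q₁ q₂ : E}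
    (hp₁ : A.le p₁ x) (hq₂ : A.le q₂ y) (hp : A.oplus p₁ p₂ = some b)
    (hq : A.oplus q₁ q₂ = some b) : A.le p₁ q₁ :=
  hR.le_left_of_disjoint_right hq (le_oplus_left hp) (hxy.mono hp₁ hq₂)

theorem existsUnique_oplus_of_disjoint (hR : A.RDP) (hxy : A.Disjoint x y)
    (hs : A.oplus x y = some s) (hbs : A.le b s) :
    ∃! p : E × E, A.le p.1 x ∧ A.le p.2 y ∧ A.oplus p.1 p.2 = some b := by
  obtain ⟨p₁, p₂, hp₁, hp₂, hp⟩ := hR b x y s hs hbs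
  refine ⟨(p₁, p₂), ⟨hp₁, hp₂, hp⟩, ?_⟩
  rintro ⟨q₁, q₂⟩ ⟨hq₁, hq₂, hq⟩
  obtain rfl : q₁ = p₁ := le_antisymm
    (hR.le_left_of_oplus_eq_oplus hxy hq₁ hp₂ hq hp)
    (hR.le_left_of_oplus_eq_oplus hxy hp₁ hq₂ hp hq)
  obtain rfl : q₂ = p₂ := oplus_left_cancel hq hp
  rfl

theorem central_of_sharp (hR : A.RDP) (ha : A.Sharp a) : A.Central a :=
  ⟨hR.principal_of_sharp ha, fun b ↦
    hR.existsUnique_oplus_of_disjoint (sharp_iff_disjoint_compl.mp ha) (A.oplus_compl a)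
      (A.le_one b)⟩

end RDP

end EffectAlgebra

/-- In an effect algebra with the Riesz decomposition property,
sharp, central and principal elements coincide. -/
theorem rdp_sharp_iff_central_iff_principal {E : Type*} (A : EffectAlgebra E)
    (hR : A.RDP) (a : E) :
    (A.Sharp a ↔ A.Central a) ∧ (A.Sharp a ↔ A.Principal a) :=
  ⟨⟨hR.central_of_sharp, fun h ↦ h.1.sharp⟩, ⟨hR.principal_of_sharp, fun h ↦ h.sharp⟩⟩
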